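/- Let Φ ∈ ℝ^{m×n} have restricted isometry constant δ_K < 1 of order K, let x ∈ ℝ^n be K-sparse with support T, |T| = K ≥ 1, and let y = Φx + v. Then max_{i ∈ {1,…,n}} |⟨φ_i, y⟩| ≥ (1/√K) · ((1 − δ_K)‖x‖₂ − √(1 + δ_K)·‖v‖₂). -/

import Mathlib

noncomputable section
open Finset

/-- `Vec n` is `ℝ^n` with the Euclidean (ℓ²) norm. -/
abbrev Vec (n : ℕ) := EuclideanSpace ℝ (Fin n)

/-- The standard inner product `⟨u, v⟩ = ∑ i, u i * v i`. -/
def dot {n : ℕ} (u v : Vec n) : ℝ := ∑ i, u i * v i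

/-- The `j`-th column of a matrix, as a Euclidean vector. -/
def col {m n : ℕ} (Φ : Matrix (Fin m) (Fin n) ℝ) (j : Fin n) : Vec m :=
  WithLp.toLp 2 fun i => Φ i j

/-- Matrix-vector multiplication `Φ x`, valued in Euclidean space. -/
def mulVec' {m n : ℕ} (Φ : Matrix (Fin m) (Fin n) ℝ) (x : Vec n) : Vec m :=
  WithLp.toLp 2 fun i => ∑ j, Φ i j * x j

/-- The support of a vector, as a `Finset`. -/
def suppF {n : ℕ} (x : Vec n) : Finset (Fin n) :=
  Finset.univ.filter fun i => x i ≠ 0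

/-- Restriction of a vector to an index set (zero outside the set). -/
def restrict {n : ℕ} (x : Vec n) (S : Finset (Fin n)) : Vec n :=
  WithLp.toLp 2 fun i => if i ∈ S then x i else 0

/-- `RIPConst Φ L δ` : δ is the restricted isometry constant of `Φ` of order `L`,
i.e. the smallest `c ≥ 0` such that `(1-c)‖u‖² ≤ ‖Φu‖² ≤ (1+c)‖u‖²` for all
`L`-sparse `u`. -/
def RIPConst {m n : ℕ} (Φ : Matrix (Fin m) (Fin n) ℝ) (L : ℕ) (δ : ℝ) : Prop :=
  IsLeast {c : ℝ | 0 ≤ c ∧ ∀ u : Vec n, (suppF u).card ≤ L →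
    (1 - c) * ‖u‖ ^ 2 ≤ ‖mulVec' Φ u‖ ^ 2 ∧ ‖mulVec' Φ u‖ ^ 2 ≤ (1 + c) * ‖u‖ ^ 2} δ

/-- Signal-to-noise ratio `‖Φx‖²/‖v‖²`. -/
def SNR {m n : ℕ} (Φ : Matrix (Fin m) (Fin n) ℝ) (x : Vec n) (v : Vec m) : ℝ :=
  ‖mulVec' Φ x‖ ^ 2 / ‖v‖ ^ 2

/-- A run of `N` iterations of Orthogonal Matching Pursuit on data `(Φ, y)`:
`idx (k+1) = t^{k+1}` is the index selected at iteration `k+1`, `sets k = T^k`,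
`est k = x^k` and `res k = r^k`. -/
structure OMPRun {m n : ℕ} (Φ : Matrix (Fin m) (Fin n) ℝ) (y : Vec m) (N : ℕ) where
  idx : ℕ → Fin n
  sets : ℕ → Finset (Fin n)
  est : ℕ → Vec n
  res : ℕ → Vec m
  sets_zero : sets 0 = ∅
  est_zero : est 0 = 0
  res_zero : res 0 = y
  idx_not_mem : ∀ k < N, idx (k + 1) ∉ sets k
  idx_max : ∀ k < N, ∀ i : Fin n, i ∉ sets k →
    |dot (col Φ i) (res k)| ≤ |dot (col Φ (idx (k + 1))) (res k)|
  sets_succ : ∀ k < N, sets (k + 1) = insert (idx (k + 1)) (sets k)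
  est_supp : ∀ k < N, suppF (est (k + 1)) ⊆ sets (k + 1)
  est_min : ∀ k < N, ∀ u : Vec n, suppF u ⊆ sets (k + 1) →
    ‖y - mulVec' Φ (est (k + 1))‖ ≤ ‖y - mulVec' Φ u‖
  res_succ : ∀ k < N, res (k + 1) = y - mulVec' Φ (est (k + 1))

/-- The vector `Φᵀ w` restricted to an index set `A` (the vector of correlations
`⟨φ_i, w⟩` for `i ∈ A`, zero outside `A`), as a Euclidean vector. -/
def colDots {m n : ℕ} (Φ : Matrix (Fin m) (Fin n) ℝ) (A : Finset (Fin n)) (w : Vec m) : Vec n :=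
  WithLp.toLp 2 fun i => if i ∈ A then dot (col Φ i) w else 0

/-- The vector `Φᵀ w` of all column correlations, as a plain function (so `‖·‖`
is the sup/ℓ∞ norm). -/
def dualVec {m n : ℕ} (Φ : Matrix (Fin m) (Fin n) ℝ) (w : Vec m) : Fin n → ℝ :=
  fun i => dot (col Φ i) w

/-- `P⊥_S w` : the projection of `w` onto the orthogonal complement of the span
of the columns of `Φ` indexed by `S`. -/
def perpProj {m n : ℕ} (Φ : Matrix (Fin m) (Fin n) ℝ) (S : Finset (Fin n)) (w : Vec m) : Vec m :=
  w - (Submodule.orthogonalProjectionOnto (Submodule.span ℝ (col Φ '' (S : Set (Fin n)))) w : Vec m)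

/-- The `j`-th largest value (1-indexed) among `{|x i| : i ∈ Γ}` (with
multiplicities); `0` if `j > |Γ|` or `j = 0`. -/
def kthLargest {n : ℕ} (x : Vec n) (Γ : Finset (Fin n)) (j : ℕ) : ℝ :=
  if 1 ≤ j ∧ j ≤ Γ.card then
    (Multiset.sort (Γ.val.map fun i => |x i|) (· ≤ ·)).getD (Γ.card - j) 0
  else 0

/-!
Put `w = ∑ i, x i • φ i` and `y = w + v`. On the one hand `⟪w, y⟫` is large: by Cauchy-Schwarz,
`|⟪w, y⟫| ≥ ‖w‖² - ‖w‖ ‖v‖ ≥ ((1 - δ) ‖x‖ - √(1 + δ) ‖v‖) ‖x‖`. On the other hand it is the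
combination `∑ i, x i ⟪φ i, y⟫` of `K` correlations, hence at most `‖x‖₁ ≤ √K ‖x‖` times the
largest of them. Dividing by `√K ‖x‖` gives the bound.
-/

theorem dot_eq_inner {n : ℕ} (u v : Vec n) : dot u v = inner ℝ u v := by
  simp [dot, PiLp.inner_apply, mul_comm]

theorem mulVec'_eq_sum_smul_col {m n : ℕ} (Φ : Matrix (Fin m) (Fin n) ℝ) (x : Vec n) :
    mulVec' Φ x = ∑ j, x j • col Φ j := by
  ext i
  simp [mulVec', col, mul_comm]

theorem eq_zero_of_notMem_suppF {n : ℕ} {x : Vec n} {i : Fin n} (hi : i ∉ suppF x) : x i = 0 := by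
  simpa [suppF] using hi

theorem sum_norm_le_sqrt_card_mul_norm {ι : Type*} {β : ι → Type*} [Fintype ι]
    [∀ i, SeminormedAddCommGroup (β i)] (s : Finset ι) (x : PiLp 2 β) :
    ∑ i ∈ s, ‖x i‖ ≤ √(#s) * ‖x‖ := by
  have sum_sq_le : ∑ i ∈ s, ‖x i‖ ^ 2 ≤ ‖x‖ ^ 2 := by
    rw [PiLp.norm_sq_eq_of_L2]
    exact sum_le_univ_sum_of_nonneg fun i => sq_nonneg ‖x i‖
  calc ∑ i ∈ s, ‖x i‖ ≤ √(#s * ‖x‖ ^ 2) :=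
        Real.le_sqrt_of_sq_le (sq_sum_le_card_mul_sum_sq.trans (by gcongr))
    _ = √(#s) * ‖x‖ := by
        rw [Real.sqrt_mul (Nat.cast_nonneg _), Real.sqrt_sq (norm_nonneg x)]

section InnerProductSpace

variable {𝕜 ι E : Type*} [RCLike 𝕜] [SeminormedAddCommGroup E] [InnerProductSpace 𝕜 E]

theorem norm_inner_sum_smul_le (s : Finset ι) (c : ι → 𝕜) (φ : ι → E) (y : E) :
    ‖inner 𝕜 (∑ i ∈ s, c i • φ i) y‖ ≤ ∑ i ∈ s, ‖c i‖ * ‖inner 𝕜 (φ i) y‖ := by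
  rw [sum_inner]
  refine norm_sum_le_of_le s fun i _ => ?_
  rw [inner_smul_left, norm_mul, RCLike.norm_conj]

theorem exists_norm_inner_sum_smul_le [Fintype ι] {s : Finset ι} (hs : s.Nonempty)
    (x : EuclideanSpace 𝕜 ι) (φ : ι → E) (y : E) :
    ∃ i ∈ s, ‖inner 𝕜 (∑ j ∈ s, x j • φ j) y‖ ≤ √(#s) * ‖x‖ * ‖inner 𝕜 (φ i) y‖ := by
  obtain ⟨i, hi, hmax⟩ := s.exists_max_image (fun j => ‖inner 𝕜 (φ j) y‖) hs
  refine ⟨i, hi, ?_⟩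
  calc ‖inner 𝕜 (∑ j ∈ s, x j • φ j) y‖
      ≤ ∑ j ∈ s, ‖x j‖ * ‖inner 𝕜 (φ j) y‖ := norm_inner_sum_smul_le s x φ y
    _ ≤ ∑ j ∈ s, ‖x j‖ * ‖inner 𝕜 (φ i) y‖ := by gcongr with j hj; exact hmax j hj
    _ = (∑ j ∈ s, ‖x j‖) * ‖inner 𝕜 (φ i) y‖ := (sum_mul ..).symm
    _ ≤ √(#s) * ‖x‖ * ‖inner 𝕜 (φ i) y‖ := by gcongr; exact sum_norm_le_sqrt_card_mul_norm s x

theorem norm_sq_sub_norm_mul_norm_le_norm_inner_add (w v : E) :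
    ‖w‖ ^ 2 - ‖w‖ * ‖v‖ ≤ ‖inner 𝕜 w (w + v)‖ := by
  calc ‖w‖ ^ 2 - ‖w‖ * ‖v‖ ≤ ‖inner 𝕜 w w‖ - ‖inner 𝕜 w v‖ := by
        rw [inner_self_eq_norm_sq_to_K, norm_pow, RCLike.norm_ofReal, abs_norm]
        gcongr
        exact norm_inner_le_norm w v
    _ ≤ ‖inner 𝕜 w (w + v)‖ := by
        rw [inner_add_right]
        exact norm_sub_le_norm_add _ _

theorem stmt12_general [Fintype ι] (φ : ι → E) (δ : ℝ) (x : EuclideanSpace 𝕜 ι) (v : E)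
    {T : Finset ι} (hT : T.Nonempty) (hsupp : ∀ i ∉ T, x i = 0)
    (hlower : (1 - δ) * ‖x‖ ^ 2 ≤ ‖∑ i, x i • φ i‖ ^ 2)
    (hupper : ‖∑ i, x i • φ i‖ ^ 2 ≤ (1 + δ) * ‖x‖ ^ 2) :
    ∃ i ∈ T, 1 / √(#T) * ((1 - δ) * ‖x‖ - √(1 + δ) * ‖v‖) ≤
      ‖inner 𝕜 (φ i) ((∑ j, x j • φ j) + v)‖ := by
  set w := ∑ i, x i • φ i
  have w_eq_sum : w = ∑ i ∈ T, x i • φ i :=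
    (sum_subset (subset_univ T) fun i _ hi => by rw [hsupp i hi, zero_smul]).symm
  obtain ⟨i, hi, inner_le⟩ := exists_norm_inner_sum_smul_le hT x φ (w + v)
  rw [← w_eq_sum] at inner_le
  refine ⟨i, hi, ?_⟩
  have sqrt_pos : 0 < √(#T : ℝ) := Real.sqrt_pos.2 (mod_cast hT.card_pos)
  rw [one_div, inv_mul_le_iff₀ sqrt_pos]
  obtain hx | hx := (norm_nonneg x).eq_or_lt
  · rw [← hx, mul_zero, zero_sub]
    exact (neg_nonpos.2 (by positivity)).trans (by positivity)
  have norm_w_le : ‖w‖ ≤ √(1 + δ) * ‖x‖ := by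
    rw [← Real.sqrt_sq hx.le, ← Real.sqrt_mul' _ (sq_nonneg ‖x‖)]
    exact Real.le_sqrt_of_sq_le hupper
  refine le_of_mul_le_mul_right ?_ hx
  calc ((1 - δ) * ‖x‖ - √(1 + δ) * ‖v‖) * ‖x‖
      = (1 - δ) * ‖x‖ ^ 2 - √(1 + δ) * ‖x‖ * ‖v‖ := by ring
    _ ≤ ‖w‖ ^ 2 - ‖w‖ * ‖v‖ := by gcongr
    _ ≤ ‖inner 𝕜 w (w + v)‖ := norm_sq_sub_norm_mul_norm_le_norm_inner_add w v
    _ ≤ √(#T) * ‖x‖ * ‖inner 𝕜 (φ i) (w + v)‖ := inner_le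
    _ = √(#T) * ‖inner 𝕜 (φ i) (w + v)‖ * ‖x‖ := by ring

end InnerProductSpace

/-- lower bound `max_i |⟨φ_i, y⟩| ≥ ((1−δ_K)‖x‖ − √(1+δ_K)‖v‖)/√K`. -/
theorem stmt12 {m n K : ℕ} (Φ : Matrix (Fin m) (Fin n) ℝ) (δ : ℝ)
    (x : Vec n) (v y : Vec m) (T : Finset (Fin n))
    (hsupp : suppF x = T) (hcard : T.card = K) (hK1 : 1 ≤ K)
    (hRIP : RIPConst Φ K δ) (hδ : δ < 1)
    (hy : y = mulVec' Φ x + v) :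
    ∃ i : Fin n,
      (1 / Real.sqrt K) * ((1 - δ) * ‖x‖ - Real.sqrt (1 + δ) * ‖v‖) ≤
        |dot (col Φ i) y| := by
  subst hy hcard hsupp
  obtain ⟨lower, upper⟩ := hRIP.1.2 x le_rfl
  simp only [dot_eq_inner, mulVec'_eq_sum_smul_col, ← Real.norm_eq_abs] at lower upper ⊢
  obtain ⟨i, -, hi⟩ := stmt12_general (col Φ) δ x v (card_pos.1 hK1)
    (fun _ => eq_zero_of_notMem_suppF) lower upper
  exact ⟨i, hi⟩

end
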